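/- Let K = ℚ(t) and let E be the elliptic curve over K given by y² = x³ + (t²+1)x + 1. Then the group E(K) of K-rational points of E is infinite. -/

import Mathlib

/-- The elliptic curve `E : y² = x³ + (t²+1)x + 1` over `K = ℚ(t)`. -/
noncomputable def Eq_t : WeierstrassCurve (RatFunc ℚ) := ⟨0, 0, 0, RatFunc.X ^ 2 + 1, 1⟩

/-!
Let `v` be a valuation with `v 2 < 1` for which the curve has integral coefficients. At a point `P`
with `v (x P) > 1` the numerator of the tangent slope has valuation `v (x P) ^ 2` and its
denominator has valuation `v 2 * v (x P) ^ (3 / 2)`, so `v (x (2P)) = v (x P) / v 2 ^ 2 > v (x P)`.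
As doubling strictly increases `v ∘ x` on such points, a single one of them forces infinitely many.

On `ℚ(t)` such a valuation comes from an embedding in `ℚ₂` that sends `t` to a transcendental number
of norm less than `1`, and `2 • (0, 1)` has `x`-coordinate `(t² + 1)² / 4`, of valuation `4`.
-/

section Valuation

variable {R Γ₀ : Type*} [Ring R] [LinearOrderedCommMonoidWithZero Γ₀] {v : Valuation R Γ₀}

lemma valuation_mul_add_of_one_lt {u x a : R} (hu : 1 ≤ v u) (hx : 1 < v x) (ha : v a ≤ 1) :
    v (u * x + a) = v u * v x := by
  have ha_lt : v a < v (u * x) := by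
    rw [map_mul]
    exact ha.trans_lt (hx.trans_le (le_mul_of_one_le_left' hu))
  rw [v.map_add_eq_of_lt_left ha_lt, map_mul]

lemma valuation_three_eq_one (hv2 : v 2 < 1) : v 3 = 1 := by
  rw [show (3 : R) = 1 + 2 by norm_num, v.map_one_add_of_lt hv2]

lemma valuation_sq_add_one_of_lt_one {x : R} (hx : v x < 1) : v (x ^ 2 + 1) = 1 := by
  rw [add_comm, v.map_one_add_of_lt]
  rw [map_pow]
  exact pow_lt_one₀ zero_le hx two_ne_zero

end Valuation

section Doubling

open WeierstrassCurve.Affine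

variable {K Γ₀ : Type*} [Field K] [LinearOrderedCommGroupWithZero Γ₀] {v : Valuation K Γ₀}

lemma one_lt_valuation_sq_add_one_sq_div_four [NeZero (2 : K)] {x : K} (hv2 : v 2 < 1)
    (hx : v x < 1) : 1 < v ((x ^ 2 + 1) ^ 2 / 4) := by
  have hv2_pos : 0 < v 2 := v.pos_iff.mpr two_ne_zero
  rw [show (4 : K) = 2 ^ 2 by norm_num, map_div₀, map_pow, map_pow,
    valuation_sq_add_one_of_lt_one hx, one_pow, one_lt_div₀ (pow_pos hv2_pos 2)]
  exact pow_lt_one₀ zero_le hv2 two_ne_zero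

variable {W : WeierstrassCurve K}

variable (v W) in
/-- The valuation of the `x`-coordinate of a point, with the junk value `0` at the point at
infinity. -/
def xValuation : W.toAffine.Point → Γ₀
  | .zero => 0
  | .some x _ _ => v x

variable [W.IsIntegral v.integer] {x y : K}

variable (v W) in
lemma valuation_a₂_le_one : v W.a₂ ≤ 1 :=
  W.integralModel_a₂_eq v.integer ▸ (W.integralModel v.integer).a₂.2

variable (v W) in
lemma valuation_a₄_le_one : v W.a₄ ≤ 1 :=
  W.integralModel_a₄_eq v.integer ▸ (W.integralModel v.integer).a₄.2

variable (v W) in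
lemma valuation_a₆_le_one : v W.a₆ ≤ 1 :=
  W.integralModel_a₆_eq v.integer ▸ (W.integralModel v.integer).a₆.2

lemma valuation_tangent_numerator (hv2 : v 2 < 1) (hx : 1 < v x) :
    v (3 * x ^ 2 + 2 * W.a₂ * x + W.a₄) = v x ^ 2 := by
  have h3 : v 3 = 1 := valuation_three_eq_one hv2
  have h2a₂ : v (2 * W.a₂) ≤ 1 := by
    rw [map_mul]
    exact mul_le_one' hv2.le (valuation_a₂_le_one v W)
  have hlin : v (3 * x + 2 * W.a₂) = v x := by
    rw [valuation_mul_add_of_one_lt h3.ge hx h2a₂, h3, one_mul]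
  rw [show 3 * x ^ 2 + 2 * W.a₂ * x + W.a₄ = (3 * x + 2 * W.a₂) * x + W.a₄ by ring,
    valuation_mul_add_of_one_lt (hlin ▸ hx.le) hx (valuation_a₄_le_one v W), hlin, sq]

variable [W.IsCharNeTwoNF]

lemma valuation_Y_sq_of_equation (hxy : W.toAffine.Equation x y) (hx : 1 < v x) :
    v y ^ 2 = v x ^ 3 := by
  have horner : y ^ 2 = ((1 * x + W.a₂) * x + W.a₄) * x + W.a₆ := by
    have h := (W.toAffine.equation_iff x y).mp hxy
    simp only [W.a₁_of_isCharNeTwoNF, W.a₃_of_isCharNeTwoNF] at h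
    linear_combination h
  have hlin : v (1 * x + W.a₂) = v x := by
    rw [valuation_mul_add_of_one_lt v.map_one.ge hx (valuation_a₂_le_one v W), map_one, one_mul]
  have hquad : v ((1 * x + W.a₂) * x + W.a₄) = v x ^ 2 := by
    rw [valuation_mul_add_of_one_lt (hlin ▸ hx.le) hx (valuation_a₄_le_one v W), hlin, sq]
  rw [← map_pow, horner, valuation_mul_add_of_one_lt (hquad ▸ one_le_pow₀ hx.le) hx
    (valuation_a₆_le_one v W), hquad, ← pow_succ]

lemma Y_ne_zero_of_one_lt_valuation_X (hxy : W.toAffine.Equation x y) (hx : 1 < v x) : y ≠ 0 := by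
  rintro rfl
  have h := valuation_Y_sq_of_equation hxy hx
  rw [map_zero, zero_pow two_ne_zero] at h
  exact (pow_pos (zero_lt_one.trans hx) 3).ne h

variable [NeZero (2 : K)]

lemma Y_ne_negY_of_one_lt_valuation_X (hxy : W.toAffine.Equation x y) (hx : 1 < v x) :
    y ≠ W.toAffine.negY x y := by
  intro h
  simp only [negY, W.a₁_of_isCharNeTwoNF, W.a₃_of_isCharNeTwoNF] at h
  have h2y : 2 * y = 0 := by linear_combination h
  exact mul_ne_zero two_ne_zero (Y_ne_zero_of_one_lt_valuation_X hxy hx) h2y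

lemma nonsingular_of_one_lt_valuation_X (hxy : W.toAffine.Equation x y) (hx : 1 < v x) :
    W.toAffine.Nonsingular x y :=
  (W.toAffine.nonsingular_iff x y).mpr
    ⟨hxy, Or.inr fun h ↦ Y_ne_negY_of_one_lt_valuation_X hxy hx (by rw [negY]; exact h)⟩

lemma valuation_slope_self_sq [DecidableEq K] (hv2 : v 2 < 1) (hxy : W.toAffine.Equation x y)
    (hx : 1 < v x) : v (W.toAffine.slope x x y y) ^ 2 = v x / v 2 ^ 2 := by
  have slope_eq : W.toAffine.slope x x y y = (3 * x ^ 2 + 2 * W.a₂ * x + W.a₄) / (2 * y) := by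
    rw [slope_of_Y_ne rfl (Y_ne_negY_of_one_lt_valuation_X hxy hx)]
    simp only [negY, W.a₁_of_isCharNeTwoNF, W.a₃_of_isCharNeTwoNF]
    ring
  have hvx : v x ≠ 0 := (zero_lt_one.trans hx).ne'
  rw [slope_eq, map_div₀, map_mul, valuation_tangent_numerator hv2 hx, div_pow, mul_pow,
    valuation_Y_sq_of_equation hxy hx]
  field_simp

lemma valuation_X_lt_addX_self [DecidableEq K] (hv2 : v 2 < 1) (hxy : W.toAffine.Equation x y)
    (hx : 1 < v x) : v x < v (W.toAffine.addX x x (W.toAffine.slope x x y y)) := by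
  set ℓ := W.toAffine.slope x x y y
  have hv2_pos : 0 < v 2 := v.pos_iff.mpr two_ne_zero
  have hℓ : v x < v (ℓ ^ 2) := by
    rw [map_pow, valuation_slope_self_sq hv2 hxy hx, lt_div_iff₀ (pow_pos hv2_pos 2)]
    exact mul_lt_of_lt_one_right (zero_lt_one.trans hx) (pow_lt_one₀ zero_le hv2 two_ne_zero)
  have addX_eq : W.toAffine.addX x x ℓ = ℓ ^ 2 - (W.a₂ + x + x) := by
    simp only [addX, W.a₁_of_isCharNeTwoNF]
    ring
  have hrest : v (W.a₂ + x + x) ≤ v x :=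
    v.map_add_le (v.map_add_le ((valuation_a₂_le_one v W).trans hx.le) le_rfl) le_rfl
  rwa [addX_eq, v.map_sub_eq_of_lt_left (hrest.trans_lt hℓ)]

lemma xValuation_lt_xValuation_add_self [DecidableEq K] (hv2 : v 2 < 1)
    {P : W.toAffine.Point} (hP : 1 < xValuation v W P) :
    xValuation v W P < xValuation v W (P + P) := by
  rcases P with _ | ⟨x, y, hns⟩
  · exact absurd hP not_lt_zero
  · rw [Point.add_self_of_Y_ne (Y_ne_negY_of_one_lt_valuation_X hns.1 hP)]
    exact valuation_X_lt_addX_self hv2 hns.1 hP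

theorem infinite_point_of_one_lt_valuation_X (hv2 : v 2 < 1) (hxy : W.toAffine.Equation x y)
    (hx : 1 < v x) : Infinite W.toAffine.Point := by
  classical
  let P : W.toAffine.Point := .some x y (nonsingular_of_one_lt_valuation_X hxy hx)
  by_contra hfin
  rw [not_infinite_iff_finite] at hfin
  obtain ⟨Q, hQ⟩ := Finite.exists_max (xValuation v W)
  have hQ_one_lt : 1 < xValuation v W Q := lt_of_lt_of_le hx (hQ P)
  exact (hQ (Q + Q)).not_gt (xValuation_lt_xValuation_add_self hv2 hQ_one_lt)

end Doubling

section RatFunc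

open NNReal

lemma dense_setOf_transcendental (k L : Type*) [CommRing k] [IsDomain k] [Countable k]
    [NontriviallyNormedField L] [CompleteSpace L] [Algebra k L] [Module.IsTorsionFree k L] :
    Dense {x : L | Transcendental k x} :=
  (Algebraic.countable k L).dense_compl L

lemma exists_ratFunc_algHom_X_mem {k L : Type*} [Field k] [Countable k]
    [NontriviallyNormedField L] [CompleteSpace L] [Algebra k L] {U : Set L} (hU : IsOpen U)
    (hne : U.Nonempty) : ∃ φ : RatFunc k →ₐ[k] L, φ RatFunc.X ∈ U := by
  obtain ⟨τ, hτ, hτU⟩ := (dense_setOf_transcendental k L).exists_mem_open hU hne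
  refine ⟨IsFractionRing.liftAlgHom (transcendental_iff_injective.mp hτ), ?_⟩
  rw [← RatFunc.algebraMap_X, IsFractionRing.liftAlgHom_apply, IsFractionRing.lift_algebraMap]
  simpa using hτU

lemma exists_valuation_ratFunc_natCast_lt_one_X_lt_one (p : ℕ) [Fact p.Prime] :
    ∃ v : Valuation (RatFunc ℚ) ℝ≥0, v p < 1 ∧ v RatFunc.X < 1 := by
  obtain ⟨φ, hφ⟩ := exists_ratFunc_algHom_X_mem (k := ℚ) (L := ℚ_[p])
    (U := Metric.ball 0 1) Metric.isOpen_ball (Metric.nonempty_ball.mpr one_pos)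
  refine ⟨NormedField.valuation.comap (φ : RatFunc ℚ →+* ℚ_[p]), ?_, ?_⟩
  · simpa [← NNReal.coe_lt_one] using Padic.norm_p_lt_one (p := p)
  · simpa [← NNReal.coe_lt_one] using hφ

end RatFunc

section Eq_t

instance : Eq_t.IsCharNeTwoNF := ⟨rfl, rfl⟩

lemma Eq_t_equation : Eq_t.toAffine.Equation
    ((RatFunc.X ^ 2 + 1) ^ 2 / 4) (1 + (RatFunc.X ^ 2 + 1) ^ 3 / 8) := by
  rw [WeierstrassCurve.Affine.equation_iff]
  simp only [Eq_t]
  ring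

lemma Eq_t_isIntegral {Γ₀ : Type*} [LinearOrderedCommGroupWithZero Γ₀]
    {v : Valuation (RatFunc ℚ) Γ₀} (hX : v RatFunc.X < 1) : Eq_t.IsIntegral v.integer :=
  WeierstrassCurve.isIntegral_of_exists_lift _ ⟨0, rfl⟩ ⟨0, rfl⟩ ⟨0, rfl⟩
    ⟨⟨RatFunc.X ^ 2 + 1, (valuation_sq_add_one_of_lt_one hX).le⟩, rfl⟩ ⟨1, rfl⟩

end Eq_t

/-- The group `E(K)` of `K`-rational points of the elliptic curve
`E : y² = x³ + (t²+1)x + 1` over `K = ℚ(t)` is infinite. -/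
theorem stmt_8 : Infinite Eq_t.toAffine.Point := by
  obtain ⟨v, hv2, hX⟩ := exists_valuation_ratFunc_natCast_lt_one_X_lt_one 2
  rw [Nat.cast_ofNat] at hv2
  have := Eq_t_isIntegral hX
  exact infinite_point_of_one_lt_valuation_X hv2 Eq_t_equation
    (one_lt_valuation_sq_add_one_sq_div_four hv2 hX)
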